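/- arXiv:1506.02243 — 2 statements merged into one kernel-verified Lean document; each statement's English description precedes it below -/
import Mathlib

section
/- Let G be a connected graph that admits a tree t-spanner T, where t ≥ 1. Then for every vertex v of G and every integer d ≥ 0, all vertices of N_G^d[v] lie in the same connected component of the subgraph of T induced by N_G^{d'}[v], where d' = d + ⌊(t−1)/2⌋. -/
/-!
Every `x` with `G.dist v x ≤ d` is joined to `v` inside the induced subgraph, by induction on
`G.dist v x`. Let `w` be the predecessor of `x` on a `G`-geodesic from `v`, so that
`G.dist v w + 1 ≤ d` and `w`, `x` are joined in `T` by a path of length at most `t`. If `z` lies on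
that path, at distance `i` from `w` and `j` from `x` along it, then `G.dist v z` is at most
`(d - 1) + i` and at most `d + j`, where `i + j ≤ t`; the smaller of these bounds is at most
`d + (t - 1) / 2`. Going through `v` matters here: for an arbitrary edge of `G` inside the
`d`-ball the same estimate would only give `d + t / 2`.
-/


open SimpleGraph

/-- `T` is a tree `t`-spanner of `G`: a spanning tree of `G` all whose distances are within a
factor `t` of those of `G`. -/
def IsTreeSpanner {V : Type*} (G T : SimpleGraph V) (t : ℕ) : Prop :=
  T ≤ G ∧ T.IsTree ∧ ∀ u w : V, T.dist u w ≤ t * G.dist u w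

/-- If `w` is closer to `v` than the radius `d` and `x` is in the `d`-ball, a walk from `w` to `x`
of length at most `t` in a subgraph of `G` stays in the ball of radius `d + (t - 1) / 2`. -/
lemma dist_le_of_mem_support_of_length_le {V : Type*} {G T : SimpleGraph V} {t d : ℕ}
    (hG : G.Connected) (hTG : T ≤ G) {v w x z : V} (p : T.Walk w x) (hp : p.length ≤ t)
    (hw : G.dist v w + 1 ≤ d) (hx : G.dist v x ≤ d) (hz : z ∈ p.support) :
    G.dist v z ≤ d + (t - 1) / 2 := by
  classical
  have hlen := congrArg Walk.length (p.take_spec hz)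
  rw [Walk.length_append] at hlen
  have h1 : G.dist w z ≤ (p.takeUntil z hz).length := by
    simpa using dist_le ((p.takeUntil z hz).mapLe hTG)
  have h2 : G.dist x z ≤ (p.dropUntil z hz).length := by
    simpa using dist_le ((p.dropUntil z hz).mapLe hTG).reverse
  have h3 : G.dist v z ≤ G.dist v w + G.dist w z := hG.dist_triangle
  have h4 : G.dist v z ≤ G.dist v x + G.dist x z := hG.dist_triangle
  omega

/-- The case of the theorem in which one of the two vertices is the centre `v` of the ball. -/
lemma center_reachable_in_induced_larger_ball {V : Type*} {G T : SimpleGraph V} {t : ℕ}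
    (hG : G.Connected) (hT : IsTreeSpanner G T t) (v : V) (d n : ℕ) :
    ∀ (x : V) (_ : G.dist v x = n) (_ : n ≤ d)
      (hv' : v ∈ {z : V | G.dist v z ≤ d + (t - 1) / 2})
      (hx' : x ∈ {z : V | G.dist v z ≤ d + (t - 1) / 2}),
      (T.induce {z : V | G.dist v z ≤ d + (t - 1) / 2}).Reachable ⟨v, hv'⟩ ⟨x, hx'⟩ := by
  obtain ⟨hTG, hTree, hdist⟩ := hT
  induction n with
  | zero =>
    intro x hx _ hv' hx'
    obtain rfl : v = x := hG.dist_eq_zero_iff.mp hx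
    exact Reachable.refl _
  | succ n ih =>
    intro x hx hn hv' hx'
    obtain ⟨w, hwx, hw⟩ : ∃ w, G.Adj w x ∧ G.dist v w = n := by
      obtain ⟨q, hq⟩ := hG.exists_walk_length_eq_dist v x
      have hnil : ¬ q.Nil := by
        intro h
        have := Walk.length_eq_zero_iff.mpr h
        omega
      refine ⟨q.penultimate, q.adj_penultimate hnil, ?_⟩
      have h1 : G.dist v q.penultimate ≤ n := by
        have := dist_le q.dropLast
        have := q.length_dropLast_add_one hnil
        omega
      have h2 : G.dist v x ≤ G.dist v q.penultimate + G.dist q.penultimate x :=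
        hG.dist_triangle
      have h3 := dist_eq_one_iff_adj.mpr (q.adj_penultimate hnil)
      omega
    have hw' : G.dist v w ≤ d + (t - 1) / 2 := by omega
    refine (ih w hw (by omega) hv' hw').trans ?_
    obtain ⟨p, hp⟩ := hTree.connected.exists_walk_length_eq_dist w x
    have hpt : p.length ≤ t := by
      have := hdist w x
      rw [dist_eq_one_iff_adj.mpr hwx] at this
      omega
    exact ⟨p.induce _ fun z hz =>
      dist_le_of_mem_support_of_length_le hG hTG p hpt (by omega) (by omega) hz⟩

/-- Let `G` be a connected graph admitting a tree `t`-spanner `T`, `t ≥ 1`.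
Then for every vertex `v` of `G` and every `d ≥ 0`, all vertices of `N_G^d[v]` lie in the
same connected component of the subgraph of `T` induced by `N_G^{d'}[v]`,
where `d' = d + ⌊(t - 1) / 2⌋`. -/
theorem ball_reachable_in_induced_larger_ball
    {V : Type*} (G T : SimpleGraph V) (t : ℕ) (ht : 1 ≤ t)
    (hG : G.Connected) (hT : IsTreeSpanner G T t) (v : V) (d : ℕ)
    (x y : V) (hx : G.dist v x ≤ d) (hy : G.dist v y ≤ d) :
    (T.induce {z : V | G.dist v z ≤ d + (t - 1) / 2}).Reachable
      ⟨x, le_trans hx (Nat.le_add_right d ((t - 1) / 2))⟩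
      ⟨y, le_trans hy (Nat.le_add_right d ((t - 1) / 2))⟩ := by
  have hv' : v ∈ {z : V | G.dist v z ≤ d + (t - 1) / 2} := by simp
  exact (center_reachable_in_induced_larger_ball hG hT v d _ x rfl hx hv' _).symm.trans
    (center_reachable_in_induced_larger_ball hG hT v d _ y rfl hy hv' _)
end

section
/- Let G be a connected graph, v a vertex of G, T a v-concentrated spanning tree of G, and u a vertex with d_G(v,u) = d > 0. Suppose that every neighbor w of u in G with d_G(v,w) ≤ d satisfies d_G(v,w) = d − 1. Then u is adjacent in T to exactly one vertex w with d_G(v,w) ≤ d, and this vertex satisfies d_G(v,w) = d − 1. -/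
/-!
With `d = d_G(v,u)`, concentration at radius `d` gives `u` a `T`-neighbor in the ball of radius
`d`, and by the hypothesis on `u` every such neighbor lies at distance `d - 1`. If `w` and `w'` are
two of them, concentration at radius `d - 1` joins them by a `T`-path inside the ball of radius
`d - 1`. This path avoids `u`, so prepending the edge `uw` gives a `T`-path from `u` to its
neighbor `w'`; in an acyclic graph the second vertex of that path must be `w'` itself
(`SimpleGraph.IsAcyclic.eq_snd_of_adj_start`), whence `w = w'`.
-/

open SimpleGraph

/-- A spanning tree `T` of `G` is `v`-concentrated if for every `i ≥ 0` the subgraph of `T`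
induced by the ball `N_G^i[v]` is connected. -/
def IsConcentrated {V : Type*} (G T : SimpleGraph V) (v : V) : Prop :=
  ∀ i : ℕ, (T.induce {x : V | G.dist v x ≤ i}).Connected

/-- Let `G` be a connected graph, `v` a vertex of `G`, `T` a
`v`-concentrated spanning tree of `G`, and `u` a vertex with `d_G(v,u) = d > 0`.  Suppose
every `G`-neighbor `w` of `u` with `d_G(v,w) ≤ d` satisfies `d_G(v,w) = d - 1`.  Then `u`
is adjacent in `T` to exactly one vertex `w` with `d_G(v,w) ≤ d`, and this vertex satisfies
`d_G(v,w) = d - 1`. -/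
theorem concentrated_unique_T_neighbor_at_prev_level
    {V : Type*} (G T : SimpleGraph V) (hG : G.Connected) (hsub : T ≤ G) (htree : T.IsTree)
    (v : V) (hconc : IsConcentrated G T v) (u : V) (hd : 0 < G.dist v u)
    (hnb : ∀ w : V, G.Adj u w → G.dist v w ≤ G.dist v u → G.dist v w + 1 = G.dist v u) :
    ∃ w : V, T.Adj u w ∧ G.dist v w + 1 = G.dist v u ∧
      ∀ w' : V, T.Adj u w' → G.dist v w' ≤ G.dist v u → w' = w := by
  have hne : u ≠ v := by
    rintro rfl
    simp at hd
  -- In the ball of radius `d`, a `T`-walk from `u` to `v ≠ u` has a first step.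
  obtain ⟨w, hw, hwd⟩ : ∃ w, T.Adj u w ∧ G.dist v w ≤ G.dist v u := by
    obtain ⟨p⟩ := (hconc (G.dist v u)).preconnected ⟨u, by simp⟩ ⟨v, by simp⟩
    cases p with
    | nil => exact absurd rfl hne
    | @cons _ x _ h q => exact ⟨x.1, h, x.2⟩
  have hlevel := hnb w (hsub hw) hwd
  refine ⟨w, hw, hlevel, fun w' hw' hwd' => ?_⟩
  have hlevel' := hnb w' (hsub hw') hwd'
  obtain ⟨p, hp⟩ := ((hconc (G.dist v u - 1)).preconnected
    ⟨w, by simp only [Set.mem_ofPred_eq]; omega⟩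
    ⟨w', by simp only [Set.mem_ofPred_eq]; omega⟩).exists_isPath
  let f := Embedding.induce (G := T) {x : V | G.dist v x ≤ G.dist v u - 1}
  have hq : (p.map f.toHom).IsPath := hp.map f.injective
  have hu : u ∉ (p.map f.toHom).support := by
    rw [Walk.support_map, List.mem_map]
    rintro ⟨x, -, hx⟩
    have hxu : x.1 = u := hx
    have hxd : G.dist v x.1 ≤ G.dist v u - 1 := x.2
    rw [hxu] at hxd
    omega
  -- Prepending `u` gives the `T`-path from `u` to its neighbor `w'`, with second vertex `w`.
  have hpath : (Walk.cons hw (p.map f.toHom)).IsPath := hq.cons hu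
  exact (htree.isAcyclic.eq_snd_of_adj_start hpath hw' (Walk.end_mem_support _)).trans
    (Walk.snd_cons _ _)
end
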